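/- arXiv:1304.4921 — 2 statements merged into one kernel-verified Lean document; each statement's English description precedes it below -/
import Mathlib

section
/- (Superregular decomposition.) Let H ≤ G = 𝔽₂ⁿ be a subgroup, g ∈ G, ρ ∈ (0,1], d ∈ (0,1], and A ⊆ H+g. Then there exist t ∈ ℕ and triples (A_i, H_i, z_i) for i = 1,…,t such that A₁,…,A_t are pairwise disjoint subsets of A with |A ∖ (A₁ ∪ ⋯ ∪ A_t)| ≤ d·|H|, and for every i: (1) H_i ≤ H is a subgroup with index |H/H_i| ≤ 2^{log(1/d)/log(1+ρ)}; (2) z_i ∈ H is a coset representative of H_i in H; (3) A_i ⊆ H_i + z_i + g and |A_i| ≥ d·|H_i|; (4) the indicator function of A_i restricted to H_i + z_i + g is ρ-superregular on H_i + z_i + g. -/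
open scoped Classical BigOperators

noncomputable section

/-- The group `G = 𝔽₂ⁿ`. -/
abbrev G (n : ℕ) : Type := Fin n → ZMod 2

/-- The coset `H + g` (note that `-g = g` in `𝔽₂ⁿ`). -/
def coset {n : ℕ} (H : AddSubgroup (G n)) (g : G n) : Set (G n) := {x | x + g ∈ H}

/-- The entropy function `f(x) = x log x` (with `f 0 = 0`). -/
def ent (x : ℝ) : ℝ := x * Real.log x

/-- The density of `A` on the coset `H + g`. -/
def dens {n : ℕ} (A : Set (G n)) (H : AddSubgroup (G n)) (g : G n) : ℝ :=
  (Nat.card ↥(A ∩ coset H g) : ℝ) / (Nat.card ↥H : ℝ)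

/-- Mean entropy `F_A(G, H)` of partitioning `G` into cosets of `H`. -/
def meanEntG {n : ℕ} (A : Set (G n)) (H : AddSubgroup (G n)) : ℝ :=
  (∑ g : G n, ent (dens A H g)) / (Fintype.card (G n) : ℝ)

/-- Mean entropy `F_A(H + g, H')` of partitioning the coset `H + g` into cosets of `H'`. -/
def meanEntCoset {n : ℕ} (A : Set (G n)) (H H' : AddSubgroup (G n)) (g : G n) : ℝ :=
  (∑ g₁ : ↥H, ent (dens A H' (g + ↑g₁))) / (Nat.card ↥H : ℝ)

/-- The standard bilinear form on `𝔽₂ⁿ`. -/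
def dotp {n : ℕ} (x y : G n) : ZMod 2 := ∑ i, x i * y i

/-- The character value `(-1)^{⟨x, y⟩}`. -/
def chi {n : ℕ} (x y : G n) : ℝ := if dotp x y = 0 then 1 else -1

/-- Fourier coefficient `f̂_H^g(η) = E_{x ∈ H} [f(x + g) · (-1)^{⟨x, η⟩}]`. -/
def fCoeff {n : ℕ} (H : AddSubgroup (G n)) (g : G n) (f : G n → ℝ) (η : G n) : ℝ :=
  (∑ x : ↥H, f (↑x + g) * chi ↑x η) / (Nat.card ↥H : ℝ)

/-- `f` is `ρ`-superregular on `H + g`: every Fourier coefficient at a character that is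
nontrivial on `H` is at most `ρ` times the zeroth coefficient in absolute value. -/
def SuperregularOn {n : ℕ} (H : AddSubgroup (G n)) (g : G n) (ρ : ℝ) (f : G n → ℝ) : Prop :=
  ∀ η : G n, (∃ x ∈ H, dotp x η ≠ 0) →
    |fCoeff H g f η| ≤ ρ * fCoeff H g f 0

/-- `H'` `(α, β, k)`-shatters `A` on `H + g`. -/
def Shatters {n : ℕ} (H' H : AddSubgroup (G n)) (A : Set (G n)) (g : G n)
    (α β k : ℝ) : Prop :=
  (Nat.card ↥H : ℝ) / (Nat.card ↥H' : ℝ) ≤ (2 : ℝ) ^ k ∧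
  α ≤ (Nat.card {g' : ↥H //
        (Nat.card ↥(A ∩ coset H' (g + ↑g')) : ℝ) ≤ β * dens A H g * (Nat.card ↥H' : ℝ)} : ℝ) /
      (Nat.card ↥H : ℝ)

/-- Number of triangles `(a, b, c)`, `a + b + c = 0`, with `a ∈ S₁`, `b ∈ S₂`, `c ∈ S₃`. -/
def triBetween {n : ℕ} (S₁ S₂ S₃ : Set (G n)) : ℕ :=
  Nat.card {p : G n × G n × G n // p.1 ∈ S₁ ∧ p.2.1 ∈ S₂ ∧ p.2.2 ∈ S₃ ∧ p.1 + p.2.1 + p.2.2 = 0}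

/-- Number of triangles in `A`. -/
def triCount {n : ℕ} (A : Set (G n)) : ℕ := triBetween A A A

/-- The annihilator of `K`: characters trivial on `K`. -/
def ann {n : ℕ} (K : AddSubgroup (G n)) : AddSubgroup (G n) where
  carrier := {η | ∀ x ∈ K, dotp x η = 0}
  zero_mem' := by intro x _; simp [dotp]
  add_mem' := by
    intro a b ha hb x hx
    have h : dotp x (a + b) = dotp x a + dotp x b := by
      simp [dotp, mul_add, Finset.sum_add_distrib]
    rw [h, ha x hx, hb x hx, add_zero]
  neg_mem' := by
    intro a ha x hx
    have h : dotp x (-a) = -dotp x a := by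
      simp [dotp]
    rw [h, ha x hx, neg_zero]

/-- Average of `f` over the coset `v + H'`. -/
def fbar {n : ℕ} (H' : AddSubgroup (G n)) (f : G n → ℝ) (v : G n) : ℝ :=
  (∑ y : ↥H', f (v + ↑y)) / (Nat.card ↥H' : ℝ)

/-- Tower function: `tower 0 = 1`, `tower (i+1) = 2 ^ tower i`. -/
def tower : ℕ → ℕ
  | 0 => 1
  | k + 1 => 2 ^ tower k

/-- `A` is `ε`-far from triangle-free: at least `ε N` elements must be removed from `A`
to destroy all triangles. -/
def FarFromTriangleFree {n : ℕ} (A : Set (G n)) (ε : ℝ) : Prop :=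
  ∀ B ⊆ A, (∀ x ∈ B, ∀ y ∈ B, ∀ z ∈ B, x + y + z ≠ 0) →
    ε * 2 ^ n ≤ (Nat.card ↥(A \ B) : ℝ)

/-- The set of elements of a triangle. -/
def elems {n : ℕ} (p : G n × G n × G n) : Set (G n) := {p.1, p.2.1, p.2.2}

/-!
If the indicator of `A` is not `ρ`-superregular on `H + g`, the offending character `η` splits
`H + g` into two halves, on which the averages of `A` have half-sum `f̂(0)` and half-difference
`±f̂(η)`; one of the two halves therefore has density greater than `(1 + ρ) f̂(0)`. Iterating this
from density at least `d` must stop, as densities never exceed `1`, after at most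
`log (1/d) / log (1 + ρ)` halvings, and yields a superregular piece of `A`. A maximal disjoint
family of such pieces leaves at most density `d` uncovered.
-/

theorem exists_pairwiseDisjoint_sdiff_sUnion {α : Type*} {good negligible : Set α → Prop}
    {A : Set α} (h : ∀ B ⊆ A, ¬ negligible B → ∃ C ⊆ B, C.Nonempty ∧ good C) :
    ∃ 𝒞 : Set (Set α), 𝒞.PairwiseDisjoint id ∧ (∀ C ∈ 𝒞, C ⊆ A ∧ good C) ∧
      negligible (A \ ⋃₀ 𝒞) := by
  obtain ⟨𝒞, ⟨hdisj, hgood⟩, hmax⟩ := zorn_subset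
    {𝒞 : Set (Set α) | 𝒞.PairwiseDisjoint id ∧ ∀ C ∈ 𝒞, C ⊆ A ∧ good C}
    fun c hc hchain ↦ ⟨⋃₀ c,
      ⟨(Set.pairwiseDisjoint_sUnion hchain.directedOn).2 fun 𝒟 h𝒟 ↦ (hc h𝒟).1,
        fun C ⟨_, h𝒟, hC⟩ ↦ (hc h𝒟).2 C hC⟩,
      fun _ ↦ Set.subset_sUnion_of_mem⟩
  refine ⟨𝒞, hdisj, hgood, by_contra fun hlarge ↦ ?_⟩
  obtain ⟨C, hC, hne, hCgood⟩ := h _ Set.sdiff_subset hlarge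
  have hCdisj : ∀ D ∈ 𝒞, Disjoint C D := fun D hD ↦
    Set.disjoint_sdiff_left.mono hC (Set.subset_sUnion_of_mem hD)
  have hmem : C ∈ 𝒞 := hmax
    ⟨hdisj.insert fun D hD _ ↦ hCdisj D hD,
      Set.forall_mem_insert.2 ⟨⟨hC.trans Set.sdiff_subset, hCgood⟩, hgood⟩⟩
    (Set.subset_insert C 𝒞) (Set.mem_insert C 𝒞)
  exact hne.ne_empty (disjoint_self.1 (hCdisj C hmem))

lemma natCast_le_log_div_log {b x : ℝ} {k : ℕ} (hb : 1 < b) (h : b ^ k ≤ x) :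
    (k : ℝ) ≤ Real.log x / Real.log b := by
  rw [le_div_iff₀ (Real.log_pos hb), ← Real.log_pow]
  exact Real.log_le_log (by positivity) h

lemma natCast_card_pos (α : Type*) [Finite α] [Nonempty α] : (0 : ℝ) < Nat.card α :=
  Nat.cast_pos.2 Nat.card_pos

section IndexTwo

variable {A : Type*} [AddGroup A] {L K : AddSubgroup A}

lemma card_mul_relIndex (hLK : L ≤ K) : Nat.card L * L.relIndex K = Nat.card K := by
  simpa only [AddSubgroup.relIndex_bot_left] using
    AddSubgroup.relIndex_mul_relIndex _ _ _ bot_le hLK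

lemma sum_eq_add_of_relIndex_eq_two {M : Type*} [AddCommMonoid M] [Fintype K] [Fintype L]
    (hLK : L ≤ K) (hindex : L.relIndex K = 2) {a : A} (ha : a ∈ K) (haL : a ∉ L) (F : A → M) :
    ∑ x : K, F x = ∑ x : L, F x + ∑ x : L, F (x + a) := by
  let φ : L ⊕ L → K := Sum.elim (fun x ↦ ⟨x, hLK x.2⟩) fun x ↦ ⟨x + a, K.add_mem (hLK x.2) ha⟩
  have hφ : Function.Bijective φ := by
    constructor
    · refine Function.Injective.sumElim (fun x y h ↦ by simpa using h)
        (fun x y h ↦ by simpa using h) fun x y h ↦ haL ?_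
      rw [← L.add_mem_cancel_left y.2, ← Subtype.mk.inj h]
      exact x.2
    · intro x
      by_cases hx : (x : A) ∈ L
      · exact ⟨.inl ⟨x, hx⟩, rfl⟩
      · have hxa : (x : A) + -a ∈ L := by
          simpa [AddSubgroup.mem_addSubgroupOf, hx, haL] using
            AddSubgroup.add_mem_iff_of_index_two hindex (a := x) (b := -⟨a, ha⟩)
        exact ⟨.inr ⟨x + -a, hxa⟩, by simp [φ]⟩
  rw [← hφ.sum_comp, Fintype.sum_sum_type]
  rfl

end IndexTwo

section Character

variable {n : ℕ}

lemma dotp_add_left (x y η : G n) : dotp (x + y) η = dotp x η + dotp y η := add_dotProduct x y η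

lemma dotp_add_left_eq_zero_iff {x y η : G n} :
    dotp (x + y) η = 0 ↔ (dotp x η = 0 ↔ dotp y η = 0) := by
  have add_eq_zero_iff : ∀ s t : ZMod 2, s + t = 0 ↔ (s = 0 ↔ t = 0) := by decide
  rw [dotp_add_left, add_eq_zero_iff]

lemma dotp_comm (x y : G n) : dotp x y = dotp y x := dotProduct_comm x y

lemma mem_ann_zmultiples {x η : G n} : x ∈ ann (AddSubgroup.zmultiples η) ↔ dotp x η = 0 := by
  rw [dotp_comm]
  refine ⟨fun h ↦ h η (AddSubgroup.mem_zmultiples η), fun h y hy ↦ ?_⟩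
  obtain ⟨k, rfl⟩ := AddSubgroup.mem_zmultiples_iff.1 hy
  exact (smul_dotProduct k η x).trans (smul_eq_zero_of_right k h)

lemma relIndex_ann_zmultiples {K : AddSubgroup (G n)} {a η : G n} (ha : a ∈ K)
    (haη : dotp a η ≠ 0) : (ann (AddSubgroup.zmultiples η)).relIndex K = 2 := by
  refine AddSubgroup.relIndex_eq_two_iff_exists_notMem_and.2
    ⟨a, ha, mt mem_ann_zmultiples.1 haη, fun b _ ↦ ?_⟩
  simp only [mem_ann_zmultiples, dotp_add_left_eq_zero_iff]
  tauto

lemma chi_eq_one {x η : G n} (h : dotp x η = 0) : chi x η = 1 := if_pos h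

lemma chi_eq_neg_one {x η : G n} (h : dotp x η ≠ 0) : chi x η = -1 := if_neg h

lemma chi_zero_right (x : G n) : chi x 0 = 1 := chi_eq_one (dotProduct_zero x)

lemma chi_add_left (x y η : G n) : chi (x + y) η = chi x η * chi y η := by
  by_cases hx : dotp x η = 0 <;> by_cases hy : dotp y η = 0 <;>
    simp [chi, dotp_add_left_eq_zero_iff, hx, hy]

end Character

section FourierCoefficient

variable {n : ℕ} {K L : AddSubgroup (G n)} {c : G n} {ρ : ℝ} {f : G n → ℝ}

lemma add_mem_coset_iff {x : G n} : x + c ∈ coset K c ↔ x ∈ K := by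
  simp [coset, add_assoc, ZModModule.add_self]

lemma fCoeff_congr_left {f' : G n → ℝ} (h : ∀ x ∈ coset K c, f x = f' x) (η : G n) :
    fCoeff K c f η = fCoeff K c f' η := by
  simp only [fCoeff, h _ (add_mem_coset_iff.2 (Subtype.prop _))]

lemma fCoeff_congr_right {η ξ : G n} (h : ∀ x ∈ K, chi x η = chi x ξ) :
    fCoeff K c f η = fCoeff K c f ξ := by
  simp only [fCoeff, h _ (Subtype.prop _)]

lemma fCoeff_eq_add_div_two (hLK : L ≤ K) (hindex : L.relIndex K = 2) {a : G n} (ha : a ∈ K)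
    (haL : a ∉ L) (c : G n) (f : G n → ℝ) (η : G n) :
    fCoeff K c f η = (fCoeff L c f η + chi a η * fCoeff L (c + a) f η) / 2 := by
  have hcard : (Nat.card K : ℝ) = Nat.card L * 2 := by
    rw [← card_mul_relIndex hLK, hindex, Nat.cast_mul, Nat.cast_two]
  have hshift (x : G n) : f (x + a + c) * chi (x + a) η =
      chi a η * (f (x + (c + a)) * chi x η) := by
    rw [chi_add_left, add_assoc, add_comm a c]
    ring
  simp only [fCoeff, hcard, hshift, ← Finset.mul_sum,
    sum_eq_add_of_relIndex_eq_two hLK hindex ha haL fun x ↦ f (x + c) * chi x η]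
  ring

theorem exists_density_increment_of_not_superregularOn (h : ¬ SuperregularOn K c ρ f) :
    ∃ L ≤ K, L.relIndex K = 2 ∧
      ∃ z ∈ K, (1 + ρ) * fCoeff K c f 0 < fCoeff L (c + z) f 0 := by
  simp only [SuperregularOn, not_forall, not_le] at h
  obtain ⟨η, ⟨a, ha, haη⟩, hlt⟩ := h
  let L := ann (AddSubgroup.zmultiples η) ⊓ K
  have hL : L ≤ K := inf_le_right
  have hindex : L.relIndex K = 2 := by
    rw [AddSubgroup.inf_relIndex_right, relIndex_ann_zmultiples ha haη]
  have haL : a ∉ L := fun haL ↦ haη (mem_ann_zmultiples.1 haL.1)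
  have hη : ∀ v, fCoeff L v f η = fCoeff L v f 0 := fun v ↦ fCoeff_congr_right fun x hx ↦ by
    rw [chi_eq_one (mem_ann_zmultiples.1 hx.1), chi_zero_right]
  have hsum := fCoeff_eq_add_div_two hL hindex ha haL c f 0
  have hdiff := fCoeff_eq_add_div_two hL hindex ha haL c f η
  rw [chi_zero_right] at hsum
  rw [hη, hη, chi_eq_neg_one haη] at hdiff
  refine ⟨L, hL, hindex, ?_⟩
  rcases lt_abs.1 hlt with hpos | hneg
  · exact ⟨0, K.zero_mem, by rw [add_zero]; linarith⟩
  · exact ⟨a, ha, by linarith⟩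

theorem exists_le_superregularOn (hρ : -1 ≤ ρ) (f : G n → ℝ) (K : AddSubgroup (G n)) (c : G n) :
    ∃ L ≤ K, ∃ z ∈ K, ∃ k : ℕ, L.relIndex K = 2 ^ k ∧
      (1 + ρ) ^ k * fCoeff K c f 0 ≤ fCoeff L (c + z) f 0 ∧ SuperregularOn L (c + z) ρ f := by
  induction K using WellFoundedLT.induction generalizing c with | _ K ih
  by_cases hreg : SuperregularOn K c ρ f
  · exact ⟨K, le_rfl, 0, K.zero_mem, 0, by simp, by simp, by rwa [add_zero]⟩
  obtain ⟨K', hK', hindex, z, hz, hincr⟩ := exists_density_increment_of_not_superregularOn hreg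
  have hlt : K' < K := hK'.lt_of_ne fun h ↦ by simp [h] at hindex
  obtain ⟨L, hL, w, hw, k, hindexL, hdens, hregL⟩ := ih K' hlt (c + z)
  rw [add_assoc] at hdens hregL
  refine ⟨L, hL.trans hK', z + w, K.add_mem hz (hK' hw), k + 1, ?_, ?_, hregL⟩
  · rw [← AddSubgroup.relIndex_mul_relIndex _ _ _ hL hK', hindexL, hindex, pow_succ]
  · calc (1 + ρ) ^ (k + 1) * fCoeff K c f 0
        = (1 + ρ) ^ k * ((1 + ρ) * fCoeff K c f 0) := by ring
      _ ≤ (1 + ρ) ^ k * fCoeff K' (c + z) f 0 := by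
        have : 0 ≤ 1 + ρ := by linarith
        gcongr
      _ ≤ fCoeff L (c + (z + w)) f 0 := hdens

end FourierCoefficient

section Density

variable {n : ℕ} {K : AddSubgroup (G n)} {c : G n} {ρ d : ℝ} {B : Set (G n)}

lemma card_inter_coset (B : Set (G n)) (K : AddSubgroup (G n)) (c : G n) :
    Nat.card ↥(B ∩ coset K c) = Nat.card {x : K // (x : G n) + c ∈ B} :=
  Nat.card_congr <| .symm <|
    (Equiv.subtypeSubtypeEquivSubtypeInter (· ∈ K) (· + c ∈ B)).trans <|
      (Equiv.addRight c).subtypeEquiv fun _ ↦ by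
        rw [Equiv.coe_addRight, Set.mem_inter_iff, add_mem_coset_iff, and_comm]

lemma fCoeff_indicator_zero (B : Set (G n)) (K : AddSubgroup (G n)) (c : G n) :
    fCoeff K c (B.indicator 1) 0 = dens B K c := by
  rw [fCoeff, dens, card_inter_coset]
  simp [Set.indicator_apply, chi_zero_right, Finset.sum_boole, Fintype.card_subtype]

lemma dens_le_one (B : Set (G n)) (K : AddSubgroup (G n)) (c : G n) : dens B K c ≤ 1 := by
  rw [dens, card_inter_coset, div_le_one (natCast_card_pos K)]
  exact_mod_cast Finite.card_subtype_le _

lemma superregularOn_indicator_inter_coset_iff :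
    SuperregularOn K c ρ ((B ∩ coset K c).indicator 1) ↔ SuperregularOn K c ρ (B.indicator 1) := by
  have hcongr : ∀ η, fCoeff K c ((B ∩ coset K c).indicator 1) η = fCoeff K c (B.indicator 1) η :=
    fCoeff_congr_left fun x hx ↦ by simp [Set.indicator, hx]
  simp only [SuperregularOn, hcongr]

/-- `C` is a superregular piece on the coset `K + z + g` of a small-index subgroup `K ≤ H`: the
properties required of each triple `(Aᵢ, Hᵢ, zᵢ)` of the decomposition, bundled so that they can be
produced for one triple at a time. -/
structure IsSuperregularPiece (H : AddSubgroup (G n)) (g : G n) (ρ d : ℝ) (C : Set (G n))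
    (K : AddSubgroup (G n)) (z : G n) : Prop where
  le : K ≤ H
  card_div_card_le : (Nat.card H : ℝ) / Nat.card K ≤
    (2 : ℝ) ^ (Real.log (1 / d) / Real.log (1 + ρ))
  mem : z ∈ H
  subset_coset : C ⊆ coset K (g + z)
  mul_card_le : d * Nat.card K ≤ Nat.card C
  superregularOn : SuperregularOn K (g + z) ρ (C.indicator 1)

lemma IsSuperregularPiece.nonempty {H : AddSubgroup (G n)} {g z : G n} {C : Set (G n)}
    (h : IsSuperregularPiece H g ρ d C K z) (hd : 0 < d) : C.Nonempty := by
  have hpos : (0 : ℝ) < Nat.card C := (mul_pos hd (natCast_card_pos K)).trans_le h.mul_card_le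
  exact Set.nonempty_coe_sort.1 (Nat.card_pos_iff.1 (Nat.cast_pos.1 hpos)).1

theorem exists_isSuperregularPiece {H : AddSubgroup (G n)} {g : G n} (hρ : 0 < ρ) (hd : 0 < d)
    (hB : d ≤ dens B H g) :
    ∃ K z, IsSuperregularPiece H g ρ d (B ∩ coset K (g + z)) K z := by
  obtain ⟨K, hK, z, hz, k, hindex, hdens, hreg⟩ :=
    exists_le_superregularOn (by linarith : -1 ≤ ρ) (B.indicator 1) H g
  rw [fCoeff_indicator_zero, fCoeff_indicator_zero] at hdens
  have hincr : (1 + ρ) ^ k * d ≤ dens B K (g + z) := le_trans (by gcongr) hdens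
  have hpow : (1 + ρ) ^ k ≤ 1 / d := (le_div_iff₀ hd).2 (hincr.trans (dens_le_one B K _))
  have hd_le : d ≤ dens B K (g + z) :=
    (le_mul_of_one_le_left hd.le (one_le_pow₀ (by linarith))).trans hincr
  have hquot : (Nat.card H : ℝ) / Nat.card K = (2 : ℝ) ^ (k : ℝ) := by
    rw [div_eq_iff (natCast_card_pos K).ne', ← card_mul_relIndex hK, hindex, Real.rpow_natCast]
    push_cast
    ring
  refine ⟨K, z, hK, ?_, hz, Set.inter_subset_right, (le_div_iff₀ (natCast_card_pos K)).1 hd_le,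
    superregularOn_indicator_inter_coset_iff.2 hreg⟩
  rw [hquot]
  exact Real.rpow_le_rpow_of_exponent_le one_le_two (natCast_le_log_div_log (by linarith) hpow)

end Density

theorem superregular_decomposition {n : ℕ} (H : AddSubgroup (G n)) (g : G n)
    (ρ d : ℝ) (hρ : ρ ∈ Set.Ioc (0 : ℝ) 1) (hd : d ∈ Set.Ioc (0 : ℝ) 1)
    (A : Set (G n)) (hA : A ⊆ coset H g) :
    ∃ (t : ℕ) (As : Fin t → Set (G n)) (Hs : Fin t → AddSubgroup (G n))
      (zs : Fin t → G n),
      (∀ i, As i ⊆ A) ∧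
      (∀ i j, i ≠ j → Disjoint (As i) (As j)) ∧
      (Nat.card ↥(A \ ⋃ i, As i) : ℝ) ≤ d * (Nat.card ↥H : ℝ) ∧
      ∀ i : Fin t,
        Hs i ≤ H ∧
        (Nat.card ↥H : ℝ) / (Nat.card ↥(Hs i) : ℝ)
          ≤ (2 : ℝ) ^ (Real.log (1 / d) / Real.log (1 + ρ)) ∧
        zs i ∈ H ∧
        As i ⊆ coset (Hs i) (g + zs i) ∧
        d * (Nat.card ↥(Hs i) : ℝ) ≤ (Nat.card ↥(As i) : ℝ) ∧
        SuperregularOn (Hs i) (g + zs i) ρ (Set.indicator (As i) 1) := by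
  have exists_piece : ∀ B ⊆ A, ¬ (Nat.card B : ℝ) ≤ d * Nat.card H →
      ∃ C ⊆ B, C.Nonempty ∧ ∃ K z, IsSuperregularPiece H g ρ d C K z := by
    intro B hB hlarge
    have hdens : d ≤ dens B H g := by
      rw [dens, Set.inter_eq_left.2 (hB.trans hA), le_div_iff₀ (natCast_card_pos H)]
      exact (not_le.1 hlarge).le
    obtain ⟨K, z, hpiece⟩ := exists_isSuperregularPiece hρ.1 hd.1 hdens
    exact ⟨_, Set.inter_subset_left, hpiece.nonempty hd.1, K, z, hpiece⟩
  obtain ⟨𝒞, hdisj, h𝒞, hsmall⟩ := exists_pairwiseDisjoint_sdiff_sUnion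
    (negligible := fun B ↦ (Nat.card B : ℝ) ≤ d * Nat.card H) exists_piece
  choose hsub Ks zs hpiece using h𝒞
  let e := (Finite.equivFin 𝒞).symm
  refine ⟨Nat.card 𝒞, fun i ↦ e i, fun i ↦ Ks _ (e i).2, fun i ↦ zs _ (e i).2,
    fun i ↦ hsub _ (e i).2, fun i j hij ↦ hdisj (e i).2 (e j).2 ?_, ?_, fun i ↦ ?_⟩
  · exact fun h ↦ hij (e.injective (Subtype.ext h))
  · rwa [e.surjective.iUnion_comp (fun C : 𝒞 ↦ (C : Set (G n))), ← Set.sUnion_eq_iUnion]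
  · obtain ⟨hle, hindex, hz, hcoset, hcard, hreg⟩ := hpiece _ (e i).2
    exact ⟨hle, hindex, hz, hcoset, hcard, hreg⟩
end
end

section
/- (Entropy increment from shattering.) Let H' ≤ H ≤ G = 𝔽₂ⁿ be subgroups, A ⊆ G, and g ∈ G. If H' (α,β,k)-shatters A on H+g, then F_A(H+g, H') ≥ F_A(H+g, H) + (1 − β + f(β))·α·(|A ∩ (H+g)|/|H|). -/
open scoped Classical BigOperators

noncomputable section

/-!
Write `φ y = y log y + 1 - y`, Mathlib's `klFun`. For every `d ≠ 0` the entropy splits as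
`f x = (x log d + x - d) + d φ (x / d)`, and averaging over values `x` of mean `d` sharpens Jensen's
inequality to the identity `E f(x) = f d + d E φ(x / d)`. Since `φ` is nonnegative and decreases on
`[0, 1]`, every value `x ≤ β d` contributes at least `φ β = 1 - β + f β`, and such values have
weight at least `α`. Here the values are the densities of `A` on the cosets of `H'`, whose mean is
the density on `H + g`.
-/

section Jensen

open InformationTheory

theorem ent_eq_add_mul_klFun (x : ℝ) {d : ℝ} (hd : d ≠ 0) :
    ent x = x * Real.log d + x - d + d * klFun (x / d) := by
  obtain rfl | hx := eq_or_ne x 0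
  · simp [ent, klFun_zero]
  · rw [ent, klFun_apply, Real.log_div hx hd]
    field_simp
    ring

theorem antitoneOn_klFun : AntitoneOn klFun (Set.Icc 0 1) := by
  refine antitoneOn_of_deriv_nonpos (convex_Icc 0 1) continuous_klFun.continuousOn
    (fun y hy ↦ ?_) (fun y hy ↦ ?_) <;> rw [interior_Icc] at hy
  · exact (hasDerivAt_klFun hy.1.ne').differentiableAt.differentiableWithinAt
  · rw [deriv_klFun]
    exact Real.log_nonpos hy.1.le hy.2.le

variable {ι : Type*} {s : Finset ι} {w x : ι → ℝ} {α β m : ℝ}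

theorem sum_mul_ent_eq_ent_add (hw : ∀ i ∈ s, 0 ≤ w i) (hw₁ : ∑ i ∈ s, w i = 1)
    (hx : ∀ i ∈ s, 0 ≤ x i) (hm : ∑ i ∈ s, w i * x i = m) :
    ∑ i ∈ s, w i * ent (x i) = ent m + m * ∑ i ∈ s, w i * klFun (x i / m) := by
  obtain rfl | hm₀ := eq_or_ne m 0
  · have hwx : ∀ i ∈ s, w i * x i = 0 :=
      (Finset.sum_eq_zero_iff_of_nonneg fun i hi ↦ mul_nonneg (hw i hi) (hx i hi)).1 hm
    rw [Finset.sum_eq_zero fun i hi ↦ by rw [ent, ← mul_assoc, hwx i hi, zero_mul]]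
    simp [ent]
  · calc ∑ i ∈ s, w i * ent (x i)
        = ∑ i ∈ s, (w i * x i * (Real.log m + 1) - w i * m + m * (w i * klFun (x i / m))) :=
          Finset.sum_congr rfl fun i _ ↦ by rw [ent_eq_add_mul_klFun (x i) hm₀]; ring
      _ = m * (Real.log m + 1) - 1 * m + m * ∑ i ∈ s, w i * klFun (x i / m) := by
          rw [Finset.sum_add_distrib, Finset.sum_sub_distrib, ← Finset.sum_mul, ← Finset.sum_mul,
            ← Finset.mul_sum, hm, hw₁]
      _ = ent m + m * ∑ i ∈ s, w i * klFun (x i / m) := by rw [ent]; ring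

theorem ent_add_le_sum_mul_ent (hw : ∀ i ∈ s, 0 ≤ w i) (hw₁ : ∑ i ∈ s, w i = 1)
    (hx : ∀ i ∈ s, 0 ≤ x i) (hm : ∑ i ∈ s, w i * x i = m) (hβ : β ∈ Set.Icc (0 : ℝ) 1)
    (hα : α ≤ ∑ i ∈ s with x i ≤ β * m, w i) :
    ent m + (1 - β + ent β) * α * m ≤ ∑ i ∈ s, w i * ent (x i) := by
  have hm₀ : 0 ≤ m := hm ▸ Finset.sum_nonneg fun i hi ↦ mul_nonneg (hw i hi) (hx i hi)
  have hφβ : 1 - β + ent β = klFun β := by rw [ent, klFun_apply]; ring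
  have klFun_le : ∀ i ∈ s, x i ≤ β * m → klFun β ≤ klFun (x i / m) := fun i hi hxi ↦
    have hxm : x i / m ≤ β := div_le_of_le_mul₀ hm₀ hβ.1 hxi
    antitoneOn_klFun ⟨div_nonneg (hx i hi) hm₀, hxm.trans hβ.2⟩ hβ hxm
  have divergence_le : klFun β * α ≤ ∑ i ∈ s, w i * klFun (x i / m) :=
    calc klFun β * α ≤ klFun β * ∑ i ∈ s with x i ≤ β * m, w i :=
          mul_le_mul_of_nonneg_left hα (klFun_nonneg hβ.1)
      _ = ∑ i ∈ s with x i ≤ β * m, w i * klFun β := by rw [mul_comm, Finset.sum_mul]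
      _ ≤ ∑ i ∈ s with x i ≤ β * m, w i * klFun (x i / m) := Finset.sum_le_sum fun i hi ↦ by
          obtain ⟨his, hxi⟩ := Finset.mem_filter.1 hi
          exact mul_le_mul_of_nonneg_left (klFun_le i his hxi) (hw i his)
      _ ≤ ∑ i ∈ s, w i * klFun (x i / m) :=
          Finset.sum_le_sum_of_subset_of_nonneg (Finset.filter_subset _ s) fun i hi _ ↦
            mul_nonneg (hw i hi) (klFun_nonneg (div_nonneg (hx i hi) hm₀))
  rw [sum_mul_ent_eq_ent_add hw hw₁ hx hm, hφβ, mul_comm m]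
  gcongr

theorem ent_expect_add_le_expect_ent [Fintype ι] [Nonempty ι] (hx : ∀ i, 0 ≤ x i)
    (hβ : β ∈ Set.Icc (0 : ℝ) 1)
    (hα : α ≤ (Nat.card {i // x i ≤ β * 𝔼 j, x j} : ℝ) / Nat.card ι) :
    ent (𝔼 i, x i) + (1 - β + ent β) * α * 𝔼 i, x i ≤ 𝔼 i, ent (x i) := by
  have expect_eq (y : ι → ℝ) : 𝔼 i, y i = ∑ i, (Nat.card ι : ℝ)⁻¹ * y i := by
    rw [Fintype.expect_eq_sum_div_card, ← Finset.mul_sum, Nat.card_eq_fintype_card, inv_mul_eq_div]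
  rw [expect_eq (fun i ↦ ent (x i))]
  refine ent_add_le_sum_mul_ent (fun _ _ ↦ by positivity) (by simp) (fun i _ ↦ hx i)
    (expect_eq x).symm hβ (hα.trans_eq ?_)
  rw [Finset.sum_const, nsmul_eq_mul, div_eq_mul_inv, Nat.card_eq_fintype_card,
    Fintype.card_subtype]

end Jensen

section CosetMean

variable {Γ M : Type*} [AddGroup Γ]

/-- The average of `f` over the right coset `H + g`. For `f` the indicator function of a set `A`
this is the density of `A` on `H + g`. -/
def cosetMean [AddCommMonoid M] [Module ℚ≥0 M] (f : Γ → M) (H : AddSubgroup Γ) [Fintype H]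
    (g : Γ) : M :=
  𝔼 h : H, f (h + g)

theorem cosetMean_nonneg {f : Γ → ℝ} (hf : ∀ x, 0 ≤ f x) (H : AddSubgroup Γ) [Fintype H] (g : Γ) :
    0 ≤ cosetMean f H g :=
  Finset.expect_nonneg fun _ _ ↦ hf _

theorem expect_cosetMean [AddCommMonoid M] [Module ℚ≥0 M] {H' H : AddSubgroup Γ} [Fintype H']
    [Fintype H] (hle : H' ≤ H) (f : Γ → M) (g : Γ) :
    𝔼 h : H, cosetMean f H' (h + g) = cosetMean f H g :=
  calc 𝔼 h : H, 𝔼 y : H', f (y + (h + g))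
      = 𝔼 y : H', 𝔼 h : H, f (y + (h + g)) := Finset.expect_comm _ _ _
    _ = 𝔼 _y : H', 𝔼 h : H, f (h + g) := Finset.expect_congr rfl fun y _ ↦
        Fintype.expect_equiv (Equiv.addLeft (AddSubgroup.inclusion hle y)) _ _ fun h ↦ by
          simp [add_assoc]
    _ = 𝔼 h : H, f (h + g) := Fintype.expect_const _

theorem entropy_increment_from_shattering_general {H' H : AddSubgroup Γ} [Fintype H'] [Fintype H]
    (hle : H' ≤ H) {f : Γ → ℝ} (hf : ∀ x, 0 ≤ f x) (g : Γ) {α β : ℝ}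
    (hβ : β ∈ Set.Icc (0 : ℝ) 1)
    (hα : α ≤ (Nat.card {h : H // cosetMean f H' (h + g) ≤ β * cosetMean f H g} : ℝ) /
      Nat.card H) :
    ent (cosetMean f H g) + (1 - β + ent β) * α * cosetMean f H g ≤
      𝔼 h : H, ent (cosetMean f H' (h + g)) := by
  rw [← expect_cosetMean hle f g] at hα ⊢
  exact ent_expect_add_le_expect_ent (fun h ↦ cosetMean_nonneg hf H' (h + g)) hβ hα

end CosetMean

section BinaryVectorSpace

variable {n : ℕ} (A : Set (G n)) (H' H : AddSubgroup (G n)) (g : G n)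

theorem dens_eq_cosetMean_indicator : dens A H g = cosetMean (A.indicator 1) H g := by
  have hcard : Nat.card ↥(A ∩ coset H g) = Nat.card {h : H // (h : G n) + g ∈ A} :=
    Nat.card_congr
      { toFun x := ⟨⟨x + g, x.2.2⟩, by simpa [add_assoc, ZModModule.add_self] using x.2.1⟩
        invFun h := ⟨h + g, h.2, by simp [coset, add_assoc, ZModModule.add_self]⟩
        left_inv x := by simp [add_assoc, ZModModule.add_self]
        right_inv h := by simp [add_assoc, ZModModule.add_self] }
  rw [dens, hcard, cosetMean, Fintype.expect_eq_sum_div_card, Nat.card_eq_fintype_card,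
    Nat.card_eq_fintype_card, Fintype.card_subtype, Finset.card_filter]
  simp [Set.indicator_apply]

theorem meanEntCoset_eq_expect :
    meanEntCoset A H H' g = 𝔼 h : H, ent (cosetMean (A.indicator 1) H' (h + g)) := by
  simp only [meanEntCoset, Fintype.expect_eq_sum_div_card, Nat.card_eq_fintype_card,
    dens_eq_cosetMean_indicator, add_comm g]

variable {A H' H g} in
theorem Shatters.le_card_div_card {α β k : ℝ} (hsh : Shatters H' H A g α β k) :
    α ≤ (Nat.card {h : H // cosetMean (A.indicator 1) H' (h + g) ≤
      β * cosetMean (A.indicator 1) H g} : ℝ) / Nat.card H := by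
  have hH' : (0 : ℝ) < Nat.card H' := Nat.cast_pos.2 Nat.card_pos
  simpa only [← dens_eq_cosetMean_indicator, dens, div_le_iff₀ hH', add_comm g] using hsh.2

end BinaryVectorSpace

theorem entropy_increment_from_shattering {n : ℕ} (H' H : AddSubgroup (G n))
    (hle : H' ≤ H) (A : Set (G n)) (g : G n) (α β k : ℝ)
    (hα : α ∈ Set.Ioc (0 : ℝ) 1) (hβ : β ∈ Set.Ioc (0 : ℝ) 1) (hk : 0 ≤ k)
    (hsh : Shatters H' H A g α β k) :
    ent (dens A H g) + (1 - β + ent β) * α * dens A H g ≤ meanEntCoset A H H' g := by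
  rw [dens_eq_cosetMean_indicator, meanEntCoset_eq_expect]
  exact entropy_increment_from_shattering_general hle
    (Set.indicator_nonneg fun _ _ ↦ zero_le_one) g (Set.Ioc_subset_Icc_self hβ) hsh.le_card_div_card
end
end
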